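/- For every s ≥ 3 there exists a weak Schur partition of {1, 2, ..., n(s)} into s subsets, where n(3) = 21 and n(s+1) = 3·n(s) - 1 for s ≥ 3. -/

import Mathlib

def WeaklySumFree (S : Finset ℕ) : Prop :=
  ∀ a ∈ S, ∀ b ∈ S, ∀ c ∈ S, a ≠ b → a ≠ c → b ≠ c → a + b ≠ c

def IsWeakSchurPartition (s n : ℕ) (P : Fin s → Finset ℕ) : Prop :=
  (∀ i, (P i).Nonempty) ∧ (∀ i j, i ≠ j → Disjoint (P i) (P j)) ∧
  (Finset.univ.biUnion P = Finset.Icc 1 n) ∧ (∀ i, WeaklySumFree (P i))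

/-!
One colouring of all positive integers serves every `s` at once: its classes are weakly sum-free,
and on `[1, n(s)]` it takes exactly `s` colours. It is obtained by substitution. Start from a
template with three ordinary colours and one special colour, of period `41` beyond `21`. Its
ordinary classes are weakly sum-free, and whenever `x`, `y`, `x + y` are all special, the index of
the length-`41` block containing `x + y` is the sum of those of `x` and `y`. Hence one may recolour
each special number by the colour of its block index under any colouring with sum-free classes.
Taking Schur's colouring, which uses `k` colours on `[1, (3 ^ k - 1) / 2]`, gives `k + 3` colours
on `[1, 41 * (3 ^ k - 1) / 2 + 21]`, and this right end is `n(k + 3)`.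
-/

/-- A colouring of the positive integers with sum-free classes; the colour of `0` is irrelevant. -/
def IsSchurColoring {α : Type*} (f : ℕ → α) : Prop :=
  ∀ ⦃x y⦄, 0 < x → 0 < y → f x = f y → f (x + y) ≠ f x

/-- A colouring of the positive integers with weakly sum-free classes, that is, with sums of two
distinct elements excluded; the colour of `0` is irrelevant. -/
def IsWeakSchurColoring {α : Type*} (f : ℕ → α) : Prop :=
  ∀ ⦃x y⦄, 0 < x → 0 < y → x ≠ y → f x = f y → f (x + y) ≠ f x

theorem IsWeakSchurColoring.isWeakSchurPartition {f : ℕ → ℕ} (hf : IsWeakSchurColoring f)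
    {s n : ℕ} (himage : f '' Set.Icc 1 n = Set.Iio s) :
    IsWeakSchurPartition s n fun i => {x ∈ Finset.Icc 1 n | f x = i} := by
  refine ⟨fun i => ?_, fun i j hij => ?_, ?_, fun i => ?_⟩
  · obtain ⟨x, hx, hxi⟩ : (i : ℕ) ∈ f '' Set.Icc 1 n := himage ▸ i.isLt
    exact ⟨x, Finset.mem_filter.2 ⟨Finset.mem_Icc.2 hx, hxi⟩⟩
  · exact Finset.disjoint_filter.2 fun x _ hi hj => hij (Fin.ext (hi.symm.trans hj))
  · ext x
    simp only [Finset.mem_biUnion, Finset.mem_univ, true_and, Finset.mem_filter]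
    refine ⟨fun ⟨_, hx, _⟩ => hx, fun hx => ?_⟩
    have hlt : f x ∈ Set.Iio s := himage ▸ Set.mem_image_of_mem f (Finset.mem_Icc.1 hx)
    exact ⟨⟨f x, hlt⟩, hx, rfl⟩
  · rintro x hx y hy _ hz hxy - - rfl
    simp only [Finset.mem_filter, Finset.mem_Icc] at hx hy hz
    exact hf hx.1.1 hy.1.1 hxy (hx.2.trans hy.2.symm) (hz.2.trans hx.2.symm)

/-- Schur's colouring of the positive integers: colour `0` is the residue class of `1` modulo `3`,
and the numbers `3 * y - 1` and `3 * y` inherit the colour of `y`, increased by one. -/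
def schurColor : ℕ → ℕ
  | 0 => 0
  | x + 1 => if x % 3 = 0 then 0 else schurColor ((x + 2) / 3) + 1

theorem schurColor_of_mod_eq_one {x : ℕ} (h : x % 3 = 1) : schurColor x = 0 := by
  obtain ⟨x, rfl⟩ := Nat.exists_eq_succ_of_ne_zero (show x ≠ 0 by omega)
  rw [schurColor, if_pos (by omega)]

theorem schurColor_of_mod_ne_one {x : ℕ} (hx : 0 < x) (h : x % 3 ≠ 1) :
    schurColor x = schurColor ((x + 1) / 3) + 1 := by
  obtain ⟨x, rfl⟩ := Nat.exists_eq_succ_of_ne_zero hx.ne'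
  rw [schurColor, if_neg (by omega)]

theorem schurColor_eq_zero_iff {x : ℕ} (hx : 0 < x) : schurColor x = 0 ↔ x % 3 = 1 := by
  refine ⟨fun h => ?_, schurColor_of_mod_eq_one⟩
  by_contra hmod
  exact Nat.succ_ne_zero _ ((schurColor_of_mod_ne_one hx hmod).symm.trans h)

theorem isSchurColoring_schurColor : IsSchurColoring schurColor := by
  intro x
  induction x using Nat.strong_induction_on with
  | _ x ih =>
    intro y hx hy hxy hsum
    have hxmod := schurColor_eq_zero_iff hx
    have hymod := schurColor_eq_zero_iff hy
    have hsmod := schurColor_eq_zero_iff (Nat.add_pos_left hx y)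
    rw [hsum] at hsmod
    rw [← hxy] at hymod
    have hx1 : x % 3 ≠ 1 := by omega
    have hy1 : y % 3 ≠ 1 := by omega
    have hs1 : (x + y) % 3 ≠ 1 := by omega
    have hadd : (x + y + 1) / 3 = (x + 1) / 3 + (y + 1) / 3 := by omega
    rw [schurColor_of_mod_ne_one hx hx1, schurColor_of_mod_ne_one hy hy1] at hxy
    rw [schurColor_of_mod_ne_one (by omega) hs1, schurColor_of_mod_ne_one hx hx1, hadd] at hsum
    exact ih ((x + 1) / 3) (by omega) (by omega) (by omega) (Nat.succ_injective hxy)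
      (Nat.succ_injective hsum)

theorem schurColor_image_Icc_succ {S k : ℕ} (h : schurColor '' Set.Icc 1 S = Set.Iio k) :
    schurColor '' Set.Icc 1 (3 * S + 1) = Set.Iio (k + 1) := by
  apply Set.Subset.antisymm
  · rintro _ ⟨x, ⟨hx, hxS⟩, rfl⟩
    by_cases hmod : x % 3 = 1
    · simp [schurColor_of_mod_eq_one hmod]
    · have hlt : schurColor ((x + 1) / 3) ∈ Set.Iio k :=
        h ▸ Set.mem_image_of_mem _ ⟨by omega, by omega⟩
      rw [schurColor_of_mod_ne_one hx hmod]
      exact Nat.succ_lt_succ hlt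
  · rintro (_ | i) hi
    · exact ⟨1, ⟨le_rfl, by omega⟩, schurColor_of_mod_eq_one rfl⟩
    · obtain ⟨y, ⟨hy, hyS⟩, rfl⟩ : i ∈ schurColor '' Set.Icc 1 S := h ▸ Nat.lt_of_succ_lt_succ hi
      refine ⟨3 * y, ⟨by omega, by omega⟩, ?_⟩
      rw [schurColor_of_mod_ne_one (by omega) (by omega), show (3 * y + 1) / 3 = y by omega]

theorem schurColor_image_Icc_geom_sum (k : ℕ) :
    schurColor '' Set.Icc 1 (∑ i ∈ Finset.range k, 3 ^ i) = Set.Iio k := by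
  induction k with
  | zero => simp
  | succ k ih => rw [geom_sum_succ]; exact schurColor_image_Icc_succ ih

theorem eventually_periodic_induction {a b : ℕ} (ha : 0 < a) {p : ℕ → Prop}
    (base : ∀ x ≤ a + b, p x) (step : ∀ x, b < x → p x → p (x + a)) (x : ℕ) : p x := by
  induction x using Nat.strong_induction_on with
  | _ x ih =>
    rcases le_or_gt x (a + b) with hx | hx
    · exact base x hx
    · rw [← Nat.sub_add_cancel (show a ≤ x by omega)]
      exact step (x - a) (by omega) (ih (x - a) (by omega))

theorem eventually_periodic_induction₂ {a b : ℕ} (ha : 0 < a) {p : ℕ → ℕ → Prop}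
    (base : ∀ x ≤ a + b, ∀ y ≤ a + b, p x y)
    (left : ∀ x y, b < x → p x y → p (x + a) y)
    (right : ∀ x y, b < y → p x y → p x (y + a)) (x y : ℕ) : p x y :=
  eventually_periodic_induction ha (p := fun x => ∀ y, p x y)
    (fun x hx => eventually_periodic_induction ha (base x hx) (right x))
    (fun x hx h y => left x y hx (h y)) x y

/-- The index `j ≥ 1` of the block `[a * (j - 1) + b + 1, a * j + b]` containing `x`. For `x ≤ b`,
which lies in no block, the value `1` is junk. -/
def blockIndex (a b x : ℕ) : ℕ := (x - (b + 1)) / a + 1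

section BlockIndex

variable {a b x : ℕ}

theorem blockIndex_eq_one (hx : b < x) (hxa : x ≤ a + b) : blockIndex a b x = 1 := by
  rw [blockIndex, Nat.div_eq_of_lt (by omega)]

theorem blockIndex_add_period (ha : 0 < a) (hx : b < x) :
    blockIndex a b (x + a) = blockIndex a b x + 1 := by
  rw [blockIndex, blockIndex, show x + a - (b + 1) = x - (b + 1) + a by omega,
    Nat.add_div_right _ ha]

theorem blockIndex_le {S : ℕ} (hx : b < x) (hxS : x ≤ a * S + b) : blockIndex a b x ≤ S :=
  Nat.div_lt_of_lt_mul (by omega)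

theorem blockIndex_block_start (ha : 0 < a) (j : ℕ) :
    blockIndex a b (b + 1 + a * j) = j + 1 := by
  rw [blockIndex, Nat.add_sub_cancel_left, Nat.mul_div_cancel_left j ha]

end BlockIndex

/-- A template of period `a` beyond `b`: the ordinary colours are those below `m`, and every
other colour is special. Everything is required only on `[1, a + b]` and extends by periodicity;
equal summands count as soon as they exceed `b`, because they then represent distinct numbers. -/
structure IsWeakSchurTemplate (a b m : ℕ) (c : ℕ → ℕ) : Prop where
  period_pos : 0 < a
  apply_add_period : ∀ x, b < x → c (x + a) = c x
  lt_of_special : ∀ x, 0 < x → m ≤ c x → b < x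
  ordinary_add_ne : ∀ x ≤ a + b, ∀ y ≤ a + b, 0 < x → 0 < y → (x = y → b < x) →
    c x < m → c x = c y → c (x + y) ≠ c x
  special_add : ∀ x ≤ a + b, ∀ y ≤ a + b, 0 < x → 0 < y → m ≤ c x → m ≤ c y → m ≤ c (x + y) →
    a + b < x + y ∧ x + y ≤ 2 * a + b

/-- The substitution of the colouring `g` into the special colour of the template `c`: a special
number receives the `g`-colour of its block index, shifted past the `m` ordinary colours. -/
def substColor (a b m : ℕ) (c g : ℕ → ℕ) (x : ℕ) : ℕ :=
  if c x < m then c x else m + g (blockIndex a b x)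

theorem substColor_of_lt {a b m : ℕ} {c : ℕ → ℕ} (g : ℕ → ℕ) {x : ℕ} (h : c x < m) :
    substColor a b m c g x = c x := if_pos h

theorem substColor_of_le {a b m : ℕ} {c : ℕ → ℕ} (g : ℕ → ℕ) {x : ℕ} (h : m ≤ c x) :
    substColor a b m c g x = m + g (blockIndex a b x) := if_neg h.not_gt

theorem substColor_lt_iff {a b m : ℕ} {c g : ℕ → ℕ} {x : ℕ} :
    substColor a b m c g x < m ↔ c x < m := by
  unfold substColor
  split_ifs <;> omega

namespace IsWeakSchurTemplate

variable {a b m : ℕ} {c g : ℕ → ℕ}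

theorem apply_add_ne (h : IsWeakSchurTemplate a b m c) {x y : ℕ} (hx : 0 < x) (hy : 0 < y)
    (hxy : x = y → b < x) (hcx : c x < m) (hc : c x = c y) : c (x + y) ≠ c x := by
  induction x, y using eventually_periodic_induction₂ (b := b) h.period_pos with
  | base x hxa y hya => exact h.ordinary_add_ne x hxa y hya hx hy hxy hcx hc
  | left x y hbx ih =>
    rw [h.apply_add_period x hbx] at hcx hc ⊢
    rw [add_right_comm, h.apply_add_period _ (by omega)]
    exact ih (by omega) hy (fun _ => hbx) hcx hc
  | right x y hby ih =>
    rw [h.apply_add_period y hby] at hc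
    rw [← add_assoc, h.apply_add_period _ (by omega)]
    exact ih hx (by omega) (fun he => he ▸ hby) hcx hc

theorem blockIndex_add (h : IsWeakSchurTemplate a b m c) {x y : ℕ} (hx : 0 < x) (hy : 0 < y)
    (hcx : m ≤ c x) (hcy : m ≤ c y) (hcs : m ≤ c (x + y)) :
    blockIndex a b (x + y) = blockIndex a b x + blockIndex a b y := by
  induction x, y using eventually_periodic_induction₂ (b := b) h.period_pos with
  | base x hxa y hya =>
    obtain ⟨hlo, hhi⟩ := h.special_add x hxa y hya hx hy hcx hcy hcs
    rw [blockIndex_eq_one (h.lt_of_special x hx hcx) hxa,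
      blockIndex_eq_one (h.lt_of_special y hy hcy) hya,
      ← Nat.sub_add_cancel (show a ≤ x + y by omega),
      blockIndex_add_period h.period_pos (by omega), blockIndex_eq_one (by omega) (by omega)]
  | left x y hbx ih =>
    rw [h.apply_add_period x hbx] at hcx
    rw [add_right_comm, h.apply_add_period _ (by omega)] at hcs
    rw [add_right_comm, blockIndex_add_period h.period_pos (by omega),
      blockIndex_add_period h.period_pos hbx, ih (by omega) hy hcx hcy hcs, add_right_comm]
  | right x y hby ih =>
    rw [h.apply_add_period y hby] at hcy
    rw [← add_assoc, h.apply_add_period _ (by omega)] at hcs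
    rw [← add_assoc, blockIndex_add_period h.period_pos (by omega),
      blockIndex_add_period h.period_pos hby, ih hx (by omega) hcx hcy hcs, add_assoc]

theorem isWeakSchurColoring_substColor (h : IsWeakSchurTemplate a b m c)
    (hg : IsSchurColoring g) : IsWeakSchurColoring (substColor a b m c g) := by
  intro x y hx hy hne hxy hsum
  have hcy : c y < m ↔ c x < m := by rw [← substColor_lt_iff, ← hxy, substColor_lt_iff]
  have hcs : c (x + y) < m ↔ c x < m := by rw [← substColor_lt_iff, hsum, substColor_lt_iff]
  rcases lt_or_ge (c x) m with hcx | hcx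
  · rw [substColor_of_lt g hcx, substColor_of_lt g (hcy.2 hcx)] at hxy
    rw [substColor_of_lt g hcx, substColor_of_lt g (hcs.2 hcx)] at hsum
    exact h.apply_add_ne hx hy (fun he => absurd he hne) hcx hxy hsum
  · replace hcy : m ≤ c y := not_lt.1 (mt hcy.1 hcx.not_gt)
    replace hcs : m ≤ c (x + y) := not_lt.1 (mt hcs.1 hcx.not_gt)
    rw [substColor_of_le g hcx, substColor_of_le g hcy] at hxy
    rw [substColor_of_le g hcx, substColor_of_le g hcs,
      h.blockIndex_add hx hy hcx hcy hcs] at hsum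
    exact hg (Nat.succ_pos _) (Nat.succ_pos _) (add_left_cancel hxy) (add_left_cancel hsum)

theorem apply_add_mul_period (h : IsWeakSchurTemplate a b m c) {x : ℕ} (hx : b < x) (j : ℕ) :
    c (x + a * j) = c x := by
  induction j with
  | zero => rfl
  | succ j ih => rw [Nat.mul_succ, ← add_assoc, h.apply_add_period _ (by omega), ih]

theorem substColor_image_Icc (h : IsWeakSchurTemplate a b m c)
    (hordinary : ∀ i < m, ∃ x ∈ Set.Icc 1 b, c x = i) (hspecial : m ≤ c (b + 1)) {S k : ℕ}
    (hg : g '' Set.Icc 1 S = Set.Iio k) :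
    substColor a b m c g '' Set.Icc 1 (a * S + b) = Set.Iio (k + m) := by
  apply Set.Subset.antisymm
  · rintro _ ⟨x, ⟨hx, hxS⟩, rfl⟩
    rcases lt_or_ge (c x) m with hcx | hcx
    · rw [substColor_of_lt g hcx]
      exact hcx.trans_le (Nat.le_add_left m k)
    · have hlt : g (blockIndex a b x) ∈ Set.Iio k :=
        hg ▸ Set.mem_image_of_mem g ⟨Nat.succ_pos _, blockIndex_le (h.lt_of_special x hx hcx) hxS⟩
      rw [substColor_of_le g hcx, add_comm m]
      exact Nat.add_lt_add_right hlt m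
  · intro i hi
    rcases lt_or_ge i m with him | him
    · obtain ⟨x, ⟨hx, hxb⟩, rfl⟩ := hordinary i him
      exact ⟨x, ⟨hx, by omega⟩, substColor_of_lt g him⟩
    · obtain ⟨j, ⟨hj, hjS⟩, hgj⟩ : i - m ∈ g '' Set.Icc 1 S :=
        hg ▸ Nat.sub_lt_right_of_lt_add him hi
      obtain ⟨j, rfl⟩ := Nat.exists_eq_add_of_le' hj
      have hcx : m ≤ c (b + 1 + a * j) :=
        hspecial.trans_eq (h.apply_add_mul_period b.lt_succ_self j).symm
      have hle : a * (j + 1) ≤ a * S := Nat.mul_le_mul_left a hjS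
      have ha := h.period_pos
      refine ⟨b + 1 + a * j, ⟨by omega, by rw [Nat.mul_succ] at hle; omega⟩, ?_⟩
      rw [substColor_of_le g hcx, blockIndex_block_start ha, hgj, Nat.add_sub_cancel' him]

end IsWeakSchurTemplate

/-- The template with ordinary colours `0`, `1`, `2` and special colour `3`, of period `41` beyond
`21`. Its restrictions to `[1, 21]` and `[1, 62]` are the weak Schur partitions for `s = 3, 4`. -/
def template41 (x : ℕ) : ℕ :=
  let r := if x ≤ 21 then x else (x - 22) % 41 + 22
  if r ∈ [1, 2, 4, 8, 11, 18, 23, 35, 44, 49, 59] then 0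
  else if r ∈ [3, 5, 6, 7, 17, 19, 21, 46, 47, 48, 60, 61, 62] then 1
  else if r ∈ [9, 10, 12, 13, 14, 15, 16, 20, 50, 51, 52, 53, 54, 55, 56, 57, 58] then 2
  else 3

theorem template41_add_period {x : ℕ} (hx : 21 < x) : template41 (x + 41) = template41 x := by
  have hr : (x + 41 - 22) % 41 = (x - 22) % 41 := by omega
  simp only [template41, if_neg hx.not_ge, if_neg (show ¬x + 41 ≤ 21 by omega), hr]

set_option synthInstance.maxSize 1000 in
theorem isWeakSchurTemplate_template41 : IsWeakSchurTemplate 41 21 3 template41 where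
  period_pos := by norm_num
  apply_add_period _ := template41_add_period
  lt_of_special x hx hcx := by
    have hordinary : ∀ x ≤ 21, 0 < x → template41 x < 3 := by decide
    exact lt_of_not_ge fun hle => (hordinary x hle hx).not_ge hcx
  ordinary_add_ne := by decide +kernel
  special_add := by decide +kernel

theorem exists_template41_eq : ∀ i < 3, ∃ x ∈ Set.Icc 1 21, template41 x = i := by
  intro i hi
  interval_cases i
  exacts [⟨1, by simp, rfl⟩, ⟨3, by simp, rfl⟩, ⟨9, by simp, rfl⟩]

theorem stmt11 (n : ℕ → ℕ) (h3 : n 3 = 21)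
    (hrec : ∀ s, 3 ≤ s → n (s + 1) = 3 * n s - 1) :
    ∀ s, 3 ≤ s → ∃ P : Fin s → Finset ℕ, IsWeakSchurPartition s (n s) P := by
  have hn (k : ℕ) : n (k + 3) = 41 * ∑ i ∈ Finset.range k, 3 ^ i + 21 := by
    induction k with
    | zero => simpa using h3
    | succ k ih =>
      rw [Nat.add_right_comm, hrec (k + 3) (Nat.le_add_left 3 k), ih, geom_sum_succ]
      omega
  intro s hs
  obtain ⟨k, rfl⟩ := Nat.exists_eq_add_of_le' hs
  have hcoloring : IsWeakSchurColoring (substColor 41 21 3 template41 schurColor) :=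
    isWeakSchurTemplate_template41.isWeakSchurColoring_substColor isSchurColoring_schurColor
  have himage : substColor 41 21 3 template41 schurColor '' Set.Icc 1 (n (k + 3)) =
      Set.Iio (k + 3) := by
    rw [hn]
    exact isWeakSchurTemplate_template41.substColor_image_Icc exists_template41_eq le_rfl
      (schurColor_image_Icc_geom_sum k)
  exact ⟨_, hcoloring.isWeakSchurPartition himage⟩
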